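/- arXiv:2303.10065 — 7 statements merged into one kernel-verified Lean document; each statement's English description precedes it below -/
import Mathlib

section
/- Let s < 1 be a real number. Then the limit as t → 0⁺ of t^{1−s} · ∫_{[1,∞)} e^{−tx} x^{−s} dx equals ∫_{(0,∞)} e^{−x} x^{−s} dx = Γ(1−s); in particular, the Laplace transform ∫_{[1,∞)} e^{−tx} x^{−s} dx behaves asymptotically like a positive constant times t^{s−1} as t → 0⁺. -/
open MeasureTheory Filter Real Set

/-- For `s < 1`, the limit as `t → 0⁺` of `t^(1-s) * ∫_{[1,∞)} e^{-tx} x^{-s} dx` equals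
`∫_{(0,∞)} e^{-x} x^{-s} dx = Γ(1-s)`. -/
theorem laplace_asymptotics_power (s : ℝ) (hs : s < 1) :
    (∫ x in Set.Ioi (0:ℝ), Real.exp (-x) * x ^ (-s)) = Real.Gamma (1 - s) ∧
    Filter.Tendsto
      (fun t : ℝ => t ^ (1 - s) * ∫ x in Set.Ici (1:ℝ), Real.exp (-t * x) * x ^ (-s))
      (nhdsWithin 0 (Set.Ioi 0))
      (nhds (∫ x in Set.Ioi (0:ℝ), Real.exp (-x) * x ^ (-s))) := by
  have hp : 0 < 1 - s := by linarith
  have he : 1 - s - 1 = -s := by ring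
  have hint := Real.GammaIntegral_convergent hp
  have hG := Real.Gamma_eq_integral hp
  rw [he] at hint hG
  refine ⟨hG.symm, ?_⟩
  have hc : AECover (volume.restrict (Ioi (0:ℝ))) (nhdsWithin (0:ℝ) (Ioi 0))
      (fun t : ℝ => Ioi t) :=
    aecover_Ioi_of_Ioi (tendsto_id.mono_left nhdsWithin_le_nhds)
  have ht := hc.integral_tendsto_of_countably_generated hint
  refine ht.congr' ?_
  filter_upwards [self_mem_nhdsWithin] with t (ht : 0 < t)
  rw [Measure.restrict_restrict measurableSet_Ioi,
    inter_eq_left.mpr (Ioi_subset_Ioi ht.le), integral_Ici_eq_integral_Ioi]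
  have h := integral_comp_mul_left_Ioi' (fun x : ℝ => Real.exp (-x) * x ^ (-s)) 1 ht
  rw [mul_one] at h
  rw [← h, smul_eq_mul, ← integral_const_mul, ← integral_const_mul]
  refine setIntegral_congr_fun measurableSet_Ioi fun x hx => ?_
  have hx0 : (0:ℝ) < x := lt_trans one_pos hx
  rw [Real.mul_rpow ht.le hx0.le, sub_eq_add_neg, Real.rpow_add ht, Real.rpow_one, neg_mul]
  ring
end

section
/- The limit as t → 0⁺ (with t ∈ (0,1)) of (∫_{[1,∞)} e^{−tx} x^{−1} dx) / (−log t) equals 1. -/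
open MeasureTheory Filter Real Set

lemma laplace_bounds (t : ℝ) (h0 : 0 < t) (h1 : t < 1) :
    -Real.log t - 1 ≤ (∫ x in Set.Ici (1:ℝ), Real.exp (-t * x) * x⁻¹) ∧
    (∫ x in Set.Ici (1:ℝ), Real.exp (-t * x) * x⁻¹) ≤ -Real.log t + 1 := by
  have hT : 1 ≤ t⁻¹ := (one_le_inv₀ h0).2 h1.le
  have hE : ∀ c : ℝ, IntegrableOn (fun x => Real.exp (-t * x)) (Ioi c) := fun c =>
    integrableOn_exp_mul_Ioi (by linarith) c
  have hI : IntegrableOn (fun x : ℝ => Real.exp (-t * x) * x⁻¹) (Ioi 1) := by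
    refine Integrable.mono' (hE 1) (by fun_prop) ?_
    refine (ae_restrict_mem measurableSet_Ioi).mono fun x hx => ?_
    have hx : 1 < x := hx
    have : x⁻¹ ≤ 1 := inv_le_one_of_one_le₀ hx.le
    rw [Real.norm_of_nonneg (by positivity)]
    exact mul_le_of_le_one_right (Real.exp_pos _).le this
  have hI2 : IntegrableOn (fun x : ℝ => Real.exp (-t * x) * x⁻¹) (Ioi t⁻¹) :=
    hI.mono_set (Ioi_subset_Ioi hT)
  have hI1 : IntervalIntegrable (fun x : ℝ => Real.exp (-t * x) * x⁻¹) volume 1 t⁻¹ :=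
    (intervalIntegrable_iff_integrableOn_Ioc_of_le hT).2 (hI.mono_set Ioc_subset_Ioi_self)
  have hinv : IntervalIntegrable (fun x : ℝ => x⁻¹) volume 1 t⁻¹ := by
    apply intervalIntegral.intervalIntegrable_inv (f := fun x => x)
    · intro x hx
      rw [uIcc_of_le hT] at hx
      linarith [hx.1]
    · exact continuousOn_id
  have hlog : ∫ x in (1:ℝ)..t⁻¹, x⁻¹ = -Real.log t := by
    rw [integral_inv_of_pos one_pos (by positivity)]; simp
  rw [integral_Ici_eq_integral_Ioi, ← intervalIntegral.integral_interval_add_Ioi hI hI2]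
  constructor
  · have a : ∫ x in (1:ℝ)..t⁻¹, (x⁻¹ - t) ≤ ∫ x in (1:ℝ)..t⁻¹, Real.exp (-t * x) * x⁻¹ := by
      refine intervalIntegral.integral_mono_on hT (hinv.sub (by simp)) hI1 fun x hx => ?_
      have hx0 : 0 < x := by linarith [hx.1]
      have := Real.add_one_le_exp (-t * x)
      calc x⁻¹ - t = (-t * x + 1) * x⁻¹ := by field_simp; ring
        _ ≤ _ := by gcongr
    rw [intervalIntegral.integral_sub hinv (by simp), hlog, intervalIntegral.integral_const,
      smul_eq_mul, sub_mul, inv_mul_cancel₀ h0.ne'] at a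
    have b : 0 ≤ ∫ x in Ioi t⁻¹, Real.exp (-t * x) * x⁻¹ := by
      refine setIntegral_nonneg measurableSet_Ioi fun x hx => ?_
      have : 0 < x := by have : t⁻¹ < x := hx; linarith
      positivity
    linarith
  · have a : ∫ x in (1:ℝ)..t⁻¹, Real.exp (-t * x) * x⁻¹ ≤ ∫ x in (1:ℝ)..t⁻¹, x⁻¹ := by
      refine intervalIntegral.integral_mono_on hT hI1 hinv fun x hx => ?_
      have hx0 : 0 < x := by linarith [hx.1]
      have : Real.exp (-t * x) ≤ 1 := Real.exp_le_one_iff.2 (by nlinarith)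
      exact mul_le_of_le_one_left (by positivity) this
    have b : ∫ x in Ioi t⁻¹, Real.exp (-t * x) * x⁻¹ ≤ ∫ x in Ioi t⁻¹, Real.exp (-t * x) * t := by
      refine setIntegral_mono_on hI2 ((hE _).mul_const t) measurableSet_Ioi fun x hx => ?_
      have hx : t⁻¹ < x := hx
      have : x⁻¹ ≤ t := inv_le_of_inv_le₀ h0 hx.le
      gcongr
    rw [integral_mul_const, integral_exp_mul_Ioi (by linarith)] at b
    have c : -Real.exp (-t * t⁻¹) / -t * t = Real.exp (-1) := by
      rw [neg_mul, mul_inv_cancel₀ h0.ne']; field_simp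
    have d : Real.exp (-1) ≤ 1 := Real.exp_le_one_iff.2 (by norm_num)
    linarith

/-- The limit as `t → 0⁺` (with `t ∈ (0,1)`) of
`(∫_{[1,∞)} e^{-tx} x⁻¹ dx) / (-log t)` equals `1`. -/
theorem laplace_asymptotics_log :
    Filter.Tendsto
      (fun t : ℝ => (∫ x in Set.Ici (1:ℝ), Real.exp (-t * x) * x⁻¹) / (-Real.log t))
      (nhdsWithin 0 (Set.Ioo 0 1)) (nhds 1) := by
  have hL : Tendsto (fun t : ℝ => (-Real.log t)⁻¹) (nhdsWithin 0 (Set.Ioo 0 1)) (nhds 0) :=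
    tendsto_inv_atTop_zero.comp (tendsto_neg_atBot_atTop.comp
      (Real.tendsto_log_nhdsGT_zero.mono_left (nhdsWithin_mono _ Ioo_subset_Ioi_self)))
  have l : Tendsto (fun t : ℝ => 1 - (-Real.log t)⁻¹) (nhdsWithin 0 (Set.Ioo 0 1)) (nhds 1) := by
    simpa using hL.const_sub 1
  have u : Tendsto (fun t : ℝ => 1 + (-Real.log t)⁻¹) (nhdsWithin 0 (Set.Ioo 0 1)) (nhds 1) := by
    simpa using hL.const_add 1
  refine tendsto_of_tendsto_of_tendsto_of_le_of_le' l u ?_ ?_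
  · filter_upwards [self_mem_nhdsWithin] with t ht
    have hp : 0 < -Real.log t := neg_pos.2 (Real.log_neg ht.1 ht.2)
    rw [le_div_iff₀ hp, sub_mul, inv_mul_cancel₀ hp.ne', one_mul]
    exact (laplace_bounds t ht.1 ht.2).1
  · filter_upwards [self_mem_nhdsWithin] with t ht
    have hp : 0 < -Real.log t := neg_pos.2 (Real.log_neg ht.1 ht.2)
    rw [div_le_iff₀ hp, add_mul, inv_mul_cancel₀ hp.ne', one_mul]
    exact (laplace_bounds t ht.1 ht.2).2
end

section
/- Let μ be a positive Borel measure on ℝ and δ > 0 be such that ∫_ℝ e^{−tx} dμ(x) < ∞ for every t ∈ (0,δ]. Then μ is tempered (i.e., there exists n ∈ ℕ with ∫_ℝ (1+λ²)^{−n} dμ(λ) < ∞) if and only if there exist N ∈ ℕ and C > 0 such that ∫_ℝ e^{−tx} dμ(x) ≤ C t^{−N} for all t ∈ (0,δ]. -/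
open MeasureTheory Filter Real Set

lemma tl_bound1 (δ : ℝ) (hδ : 0 < δ) (n : ℕ) (t : ℝ) (ht : t ∈ Set.Ioc 0 δ) (x : ℝ) :
    Real.exp (-t * x) ≤ Real.exp (-δ * x) +
      ((δ ^ 2 + 2 * ((n:ℝ) + 1) ^ 2) ^ n * (t ^ (2 * n))⁻¹) * ((1 + x ^ 2) ^ n)⁻¹ := by
  obtain ⟨h0, h1⟩ := ht
  rcases le_total x 0 with hx | hx
  · have : Real.exp (-t * x) ≤ Real.exp (-δ * x) := Real.exp_le_exp.2 (by nlinarith)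
    have h2 : 0 ≤ ((δ ^ 2 + 2 * ((n:ℝ) + 1) ^ 2) ^ n * (t ^ (2 * n))⁻¹) * ((1 + x ^ 2) ^ n)⁻¹ := by
      positivity
    linarith
  · have hm : (0:ℝ) < (n:ℝ) + 1 := by positivity
    set m : ℝ := (n:ℝ) + 1 with hmdef
    have hs : 0 ≤ t * x := by positivity
    have hq := Real.quadratic_le_exp_of_nonneg (x := t * x / m) (by positivity)
    have hu : 0 ≤ t * x / m := by positivity
    have e1 : (t * x) = m * (t * x / m) := by field_simp
    set u := t * x / m with hudef
    have key : t ^ 2 * (1 + x ^ 2) ≤ (δ ^ 2 + 2 * m ^ 2) * Real.exp u := by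
      have a : t ^ 2 * (1 + x ^ 2) ≤ δ ^ 2 + m ^ 2 * u ^ 2 := by
        have : t ^ 2 * (1 + x ^ 2) = t ^ 2 + (t * x) ^ 2 := by ring
        rw [this, e1, mul_pow]
        have : t ^ 2 ≤ δ ^ 2 := by gcongr
        linarith
      have b : (δ ^ 2 + 2 * m ^ 2) * (1 + u + u ^ 2 / 2) ≤ (δ ^ 2 + 2 * m ^ 2) * Real.exp u := by
        gcongr
      have c : δ ^ 2 + m ^ 2 * u ^ 2 ≤ (δ ^ 2 + 2 * m ^ 2) * (1 + u + u ^ 2 / 2) := by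
        have : 0 ≤ δ ^ 2 * (u + u ^ 2 / 2) + 2 * m ^ 2 * (1 + u) := by positivity
        nlinarith
      linarith
    have kp : (t ^ 2 * (1 + x ^ 2)) ^ n ≤ (δ ^ 2 + 2 * m ^ 2) ^ n * Real.exp (t * x) := by
      calc _ ≤ ((δ ^ 2 + 2 * m ^ 2) * Real.exp u) ^ n := by gcongr
        _ = (δ ^ 2 + 2 * m ^ 2) ^ n * Real.exp (n * u) := by rw [mul_pow, ← Real.exp_nat_mul]
        _ ≤ _ := by
          have : (n:ℝ) * u ≤ t * x := by rw [e1, hmdef]; nlinarith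
          have := Real.exp_le_exp.2 this
          exact mul_le_mul_of_nonneg_left this (by positivity)
    have h3 : Real.exp (-t * x) ≤
        ((δ ^ 2 + 2 * m ^ 2) ^ n * (t ^ (2 * n))⁻¹) * ((1 + x ^ 2) ^ n)⁻¹ := by
      rw [mul_assoc, ← mul_inv, ← div_eq_mul_inv, neg_mul, Real.exp_neg,
        le_div_iff₀ (by positivity), inv_mul_le_iff₀ (Real.exp_pos _)]
      rw [pow_mul, ← mul_pow]
      linarith
    have := Real.exp_pos (-δ * x)
    linarith

lemma tl_bound2 (δ : ℝ) (hδ : 0 < δ) (n : ℕ) (x : ℝ) :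
    ∃ j : ℕ, ((1 + x ^ 2) ^ n)⁻¹ ≤ (2 ^ n * Real.exp δ * (δ ^ n)⁻¹) *
      ((δ / ((j:ℝ) + 1)) ^ n * Real.exp (-(δ / ((j:ℝ) + 1)) * x)) := by
  refine ⟨⌊|x|⌋₊, ?_⟩
  have h1 : ((⌊|x|⌋₊ : ℕ) : ℝ) ≤ |x| := Nat.floor_le (abs_nonneg x)
  have h2 : |x| < ((⌊|x|⌋₊ : ℕ) : ℝ) + 1 := Nat.lt_floor_add_one _
  set j : ℝ := ((⌊|x|⌋₊ : ℕ) : ℝ)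
  have hj : 0 ≤ j := by positivity
  have he : 1 ≤ Real.exp δ * Real.exp (-(δ / (j + 1)) * x) := by
    rw [← Real.exp_add]
    apply Real.one_le_exp
    have : δ / (j + 1) * x ≤ δ := by
      rw [div_mul_eq_mul_div, div_le_iff₀ (by positivity)]
      have := le_abs_self x
      gcongr; linarith
    linarith
  have hb : (j + 1) ≤ 2 * (1 + x ^ 2) := by
    have := sq_abs x
    nlinarith [sq_nonneg (|x| - 1)]
  have hc : ((1 + x ^ 2) ^ n)⁻¹ ≤ 2 ^ n * ((j + 1) ^ n)⁻¹ := by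
    rw [← div_eq_mul_inv, le_div_iff₀ (by positivity), inv_mul_le_iff₀ (by positivity), ← mul_pow]
    gcongr; linarith
  calc ((1 + x ^ 2) ^ n)⁻¹ ≤ 2 ^ n * ((j + 1) ^ n)⁻¹ := hc
    _ ≤ 2 ^ n * ((j + 1) ^ n)⁻¹ * (Real.exp δ * Real.exp (-(δ / (j + 1)) * x)) :=
        le_mul_of_one_le_right (by positivity) he
    _ = _ := by
      rw [div_pow]; field_simp

/-- A positive Borel measure `μ` on `ℝ` whose Laplace transform is finite on `(0,δ]`
is tempered if and only if its Laplace transform satisfies a bound `C t^{-N}` on `(0,δ]`. -/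
theorem tempered_iff_laplace_polynomial_bound (μ : Measure ℝ) (δ : ℝ) (hδ : 0 < δ)
    (hfin : ∀ t ∈ Set.Ioc 0 δ, ∫⁻ x, ENNReal.ofReal (Real.exp (-t * x)) ∂μ < ⊤) :
    (∃ n : ℕ, ∫⁻ l, ENNReal.ofReal (((1 + l ^ 2) ^ n)⁻¹) ∂μ < ⊤) ↔
      (∃ N : ℕ, ∃ C : ℝ, 0 < C ∧ ∀ t ∈ Set.Ioc 0 δ,
        ∫⁻ x, ENNReal.ofReal (Real.exp (-t * x)) ∂μ ≤
          ENNReal.ofReal (C * t ^ (-(N:ℝ)))) := by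
  constructor
  · rintro ⟨n, hn⟩
    have hA := hfin δ ⟨hδ, le_rfl⟩
    obtain ⟨A, hA0, hA'⟩ : ∃ A : ℝ, 0 ≤ A ∧
        ∫⁻ x, ENNReal.ofReal (Real.exp (-δ * x)) ∂μ = ENNReal.ofReal A :=
      ⟨_, ENNReal.toReal_nonneg, (ENNReal.ofReal_toReal hA.ne).symm⟩
    obtain ⟨B, hB0, hB'⟩ : ∃ B : ℝ, 0 ≤ B ∧
        ∫⁻ l, ENNReal.ofReal (((1 + l ^ 2) ^ n)⁻¹) ∂μ = ENNReal.ofReal B :=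
      ⟨_, ENNReal.toReal_nonneg, (ENNReal.ofReal_toReal hn.ne).symm⟩
    set K : ℝ := (δ ^ 2 + 2 * ((n:ℝ) + 1) ^ 2) ^ n with hK
    have hK0 : 0 ≤ K := by positivity
    refine ⟨2 * n, A * δ ^ (2 * n) + K * B + 1, by positivity, fun t ht => ?_⟩
    have ht0 : 0 < t := ht.1
    calc ∫⁻ x, ENNReal.ofReal (Real.exp (-t * x)) ∂μ
        ≤ ∫⁻ x, (ENNReal.ofReal (Real.exp (-δ * x)) +
          ENNReal.ofReal (K * (t ^ (2 * n))⁻¹) * ENNReal.ofReal (((1 + x ^ 2) ^ n)⁻¹)) ∂μ := by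
          apply lintegral_mono
          intro x
          dsimp only
          rw [← ENNReal.ofReal_mul (by positivity), ← ENNReal.ofReal_add (by positivity)
            (by positivity)]
          exact ENNReal.ofReal_le_ofReal (tl_bound1 δ hδ n t ht x)
      _ = ENNReal.ofReal A + ENNReal.ofReal (K * (t ^ (2 * n))⁻¹) * ENNReal.ofReal B := by
          rw [lintegral_add_left (by fun_prop), lintegral_const_mul' _ _ ENNReal.ofReal_ne_top,
            hA', hB']
      _ = ENNReal.ofReal (A + K * (t ^ (2 * n))⁻¹ * B) := by
          rw [← ENNReal.ofReal_mul (by positivity), ← ENNReal.ofReal_add (by positivity)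
            (by positivity)]
      _ ≤ _ := by
          apply ENNReal.ofReal_le_ofReal
          rw [Real.rpow_neg ht0.le, Real.rpow_natCast,
            le_mul_inv_iff₀ (by positivity)]
          have e : (A + K * (t ^ (2 * n))⁻¹ * B) * t ^ (2 * n) = A * t ^ (2 * n) + K * B := by
            field_simp
          rw [e]
          have : A * t ^ (2 * n) ≤ A * δ ^ (2 * n) := by
            have := ht.2
            gcongr
          linarith
  · rintro ⟨N, C, hC, h⟩
    refine ⟨N + 2, ?_⟩
    set n := N + 2 with hn
    set K : ℝ := 2 ^ n * Real.exp δ * (δ ^ n)⁻¹ with hK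
    have hK0 : 0 ≤ K := by positivity
    set t : ℕ → ℝ := fun j => δ / ((j:ℝ) + 1) with htdef
    have ht : ∀ j, t j ∈ Set.Ioc 0 δ := fun j =>
      ⟨by simp only [htdef]; positivity, div_le_self hδ.le (by simp)⟩
    have hsum : Summable (fun j => C * t j ^ 2) := by
      apply Summable.mul_left
      have := ((summable_nat_add_iff 1).2
        (Real.summable_one_div_nat_pow.2 (by norm_num : 1 < 2))).mul_left (δ ^ 2)
      refine this.congr fun j => ?_
      simp only [htdef]; push_cast; rw [div_pow]; ring
    calc ∫⁻ x, ENNReal.ofReal (((1 + x ^ 2) ^ n)⁻¹) ∂μ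
        ≤ ∫⁻ x, ENNReal.ofReal K * ∑' j, (ENNReal.ofReal (t j ^ n) *
            ENNReal.ofReal (Real.exp (-t j * x))) ∂μ := by
          apply lintegral_mono
          intro x
          obtain ⟨j, hj⟩ := tl_bound2 δ hδ n x
          have hp := (ht j).1
          calc ENNReal.ofReal (((1 + x ^ 2) ^ n)⁻¹)
              ≤ ENNReal.ofReal (K * (t j ^ n * Real.exp (-t j * x))) :=
                ENNReal.ofReal_le_ofReal hj
            _ = ENNReal.ofReal K * (ENNReal.ofReal (t j ^ n) *
                  ENNReal.ofReal (Real.exp (-t j * x))) := by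
                rw [ENNReal.ofReal_mul hK0, ENNReal.ofReal_mul (p := t j ^ n) (by positivity)]
            _ ≤ _ := by
                refine mul_le_mul' le_rfl ?_
                exact ENNReal.le_tsum (f := fun j => ENNReal.ofReal (t j ^ n) *
                  ENNReal.ofReal (Real.exp (-t j * x))) j
      _ = ENNReal.ofReal K * ∑' j, (ENNReal.ofReal (t j ^ n) *
            ∫⁻ x, ENNReal.ofReal (Real.exp (-t j * x)) ∂μ) := by
          rw [lintegral_const_mul' _ _ ENNReal.ofReal_ne_top, lintegral_tsum (by fun_prop)]
          simp_rw [lintegral_const_mul' _ _ ENNReal.ofReal_ne_top]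
      _ ≤ ENNReal.ofReal K * ∑' j, ENNReal.ofReal (C * t j ^ 2) := by
          gcongr with j
          have hp := (ht j).1
          calc _ ≤ ENNReal.ofReal (t j ^ n) * ENNReal.ofReal (C * t j ^ (-(N:ℝ))) := by
                gcongr; exact h _ (ht j)
            _ = _ := by
              rw [← ENNReal.ofReal_mul (by positivity), Real.rpow_neg hp.le, Real.rpow_natCast,
                hn, pow_add]
              congr 1
              field_simp
      _ < ⊤ := ENNReal.mul_lt_top ENNReal.ofReal_lt_top hsum.tsum_ofReal_lt_top
end

section
/- Let μ be a positive Borel measure on [1,∞), let δ ∈ (0,1), N ∈ ℕ with N ≥ 1, and C > 0 be such that ∫_{[1,∞)} e^{−tx} dμ(x) ≤ C t^{−N} for all t ∈ (0,δ]. Then ∫_{[1,∞)} x^{−(N+1)} dμ(x) < ∞. -/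
open MeasureTheory Filter Real Set

/-- If `μ` is a positive Borel measure on `[1,∞)`, `δ ∈ (0,1)`, `N ≥ 1` a natural number,
and `C > 0` with `∫_{[1,∞)} e^{-tx} dμ(x) ≤ C t^{-N}` for all `t ∈ (0,δ]`, then
`∫_{[1,∞)} x^{-(N+1)} dμ(x) < ∞`. -/
theorem inverse_moment_of_laplace_bound (μ : Measure ℝ) (hμ : μ (Set.Iio 1) = 0)
    (δ : ℝ) (hδ : δ ∈ Set.Ioo (0:ℝ) 1) (N : ℕ) (hN : 1 ≤ N) (C : ℝ) (hC : 0 < C)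
    (hbound : ∀ t ∈ Set.Ioc 0 δ,
      ∫⁻ x in Set.Ici (1:ℝ), ENNReal.ofReal (Real.exp (-t * x)) ∂μ ≤
        ENNReal.ofReal (C * t ^ (-(N:ℝ)))) :
    ∫⁻ x in Set.Ici (1:ℝ), ENNReal.ofReal ((x ^ (N + 1))⁻¹) ∂μ < ⊤ := by
  obtain ⟨hδ0, hδ1⟩ := hδ
  have key : ∀ x ∈ Set.Ici (1:ℝ), ENNReal.ofReal ((x ^ (N + 1))⁻¹) ≤
      ∑' k : ℕ, ENNReal.ofReal (Real.exp 2 * (((2:ℝ) ^ k) ^ (N + 1))⁻¹) *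
        ENNReal.ofReal (Real.exp (-(δ / 2 ^ k) * x)) := by
    intro x hx
    obtain ⟨k, hk1, hk2⟩ := exists_nat_pow_near (Set.mem_Ici.1 hx) (one_lt_two : (1:ℝ) < 2)
    refine le_trans ?_ (ENNReal.le_tsum k)
    rw [← ENNReal.ofReal_mul (by positivity)]
    apply ENNReal.ofReal_le_ofReal
    have hp : (0:ℝ) < 2 ^ k := by positivity
    have h1 : (x ^ (N + 1))⁻¹ ≤ (((2:ℝ) ^ k) ^ (N + 1))⁻¹ := by gcongr
    have h2 : 1 ≤ Real.exp 2 * Real.exp (-(δ / 2 ^ k) * x) := by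
      rw [← Real.exp_add]
      apply Real.one_le_exp
      have : δ / 2 ^ k * x ≤ 2 := by
        rw [div_mul_eq_mul_div, div_le_iff₀ hp]
        rw [pow_succ] at hk2
        have : 0 < x := lt_of_lt_of_le one_pos hx
        nlinarith
      linarith
    have h3 : (0:ℝ) ≤ (((2:ℝ) ^ k) ^ (N + 1))⁻¹ := by positivity
    calc (x ^ (N + 1))⁻¹ ≤ (((2:ℝ) ^ k) ^ (N + 1))⁻¹ * 1 := by simpa using h1
      _ ≤ (((2:ℝ) ^ k) ^ (N + 1))⁻¹ * (Real.exp 2 * Real.exp (-(δ / 2 ^ k) * x)) := by gcongr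
      _ = _ := by ring
  refine lt_of_le_of_lt (setLIntegral_mono' measurableSet_Ici key) ?_
  rw [lintegral_tsum (fun k => by fun_prop)]
  have hterm : ∀ k : ℕ, ∫⁻ x in Set.Ici (1:ℝ),
      ENNReal.ofReal (Real.exp 2 * (((2:ℝ) ^ k) ^ (N + 1))⁻¹) *
        ENNReal.ofReal (Real.exp (-(δ / 2 ^ k) * x)) ∂μ ≤
      ENNReal.ofReal (Real.exp 2 * C * (δ ^ N)⁻¹ * (1 / 2) ^ k) := by
    intro k
    rw [lintegral_const_mul _ (by fun_prop)]
    have hp : (0:ℝ) < 2 ^ k := by positivity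
    have hb := hbound (δ / 2 ^ k) ⟨by positivity, div_le_self hδ0.le (one_le_pow₀ one_le_two)⟩
    refine (mul_le_mul_right hb _).trans ?_
    rw [← ENNReal.ofReal_mul (by positivity)]
    apply le_of_eq
    congr 1
    rw [Real.rpow_neg (by positivity), Real.rpow_natCast, div_pow, one_div, inv_pow]
    field_simp
    try ring
  refine lt_of_le_of_lt (ENNReal.tsum_le_tsum hterm) ?_
  rw [← ENNReal.ofReal_tsum_of_nonneg (fun k => by positivity)
    (summable_geometric_two.mul_left _)]
  exact ENNReal.ofReal_lt_top
end

section
/- Let μ be a positive Borel measure on [1,∞), δ ∈ (0,1) and C > 0 be such that ∫_{[1,∞)} e^{−tx} dμ(x) ≤ C t^{−1} for all t ∈ (0,δ]. Then there exists C′ > 0 such that ∫_{[1,∞)} e^{−tx} x^{−1} dμ(x) ≤ C′ (−log t) for all t ∈ (0,δ]. -/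
open MeasureTheory Filter Real Set

lemma aux_sfinite (ν : Measure ℝ) (δ : ℝ)
    (h : ∫⁻ x, ENNReal.ofReal (Real.exp (-δ * x)) ∂ν ≠ ⊤) : SFinite ν := by
  have hm : Measurable (fun x : ℝ => ENNReal.ofReal (Real.exp (-δ * x))) := by fun_prop
  have h1 : IsFiniteMeasure (ν.withDensity (fun x => ENNReal.ofReal (Real.exp (-δ * x)))) :=
    isFiniteMeasure_withDensity h
  have h2 := withDensity_inv_same (μ := ν) hm
    (Filter.Eventually.of_forall fun x => (by simp [Real.exp_pos]))
    (Filter.Eventually.of_forall fun x => ENNReal.ofReal_ne_top)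
  rw [← h2]
  infer_instance

lemma aux_point (t δ x : ℝ) (htδ : t ≤ δ) (hx : 1 ≤ x) :
    ENNReal.ofReal (Real.exp (-t * x) * x⁻¹) ≤ ENNReal.ofReal (Real.exp (-δ * x)) +
      ∫⁻ s in Set.Ioc t δ, ENNReal.ofReal (Real.exp (-s * x)) := by
  have hx0 : 0 < x := by linarith
  have hi : ∫ s in t..δ, Real.exp (-s * x) = Real.exp (-t * x) * x⁻¹ - Real.exp (-δ * x) * x⁻¹ := by
    have hd : ∀ s ∈ Set.uIcc t δ,
        HasDerivAt (fun s => -(Real.exp (-s * x) * x⁻¹)) (Real.exp (-s * x)) s := by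
      intro s _
      have := ((((hasDerivAt_id s).neg.mul_const x).exp).mul_const x⁻¹).neg
      refine HasDerivAt.congr_deriv (f' := -(Real.exp (-s * x) * (-1 * x) * x⁻¹)) this ?_
      field_simp
    rw [intervalIntegral.integral_eq_sub_of_hasDerivAt hd
      (Continuous.intervalIntegrable (by fun_prop) _ _)]
    ring
  have hI : IntegrableOn (fun s => Real.exp (-s * x)) (Set.Ioc t δ) volume :=
    (Continuous.intervalIntegrable (by fun_prop) t δ).1
  rw [← ofReal_integral_eq_lintegral_ofReal hI
    (Filter.Eventually.of_forall fun s => (Real.exp_pos _).le),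
    ← intervalIntegral.integral_of_le htδ, hi]
  have h3 : Real.exp (-δ * x) * x⁻¹ ≤ Real.exp (-δ * x) :=
    mul_le_of_le_one_right (Real.exp_pos _).le (inv_le_one_of_one_le₀ hx)
  have h4 : 0 ≤ Real.exp (-t * x) * x⁻¹ - Real.exp (-δ * x) * x⁻¹ := by
    rw [← hi]; exact intervalIntegral.integral_nonneg htδ (fun s _ => (Real.exp_pos _).le)
  rw [← ENNReal.ofReal_add (Real.exp_pos _).le h4]
  exact ENNReal.ofReal_le_ofReal (by linarith)

/-- If `μ` is a positive Borel measure on `[1,∞)`, `δ ∈ (0,1)` and `C > 0` with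
`∫_{[1,∞)} e^{-tx} dμ(x) ≤ C t⁻¹` for all `t ∈ (0,δ]`, then there exists `C' > 0` with
`∫_{[1,∞)} e^{-tx} x⁻¹ dμ(x) ≤ C' (-log t)` for all `t ∈ (0,δ]`. -/
theorem laplace_log_bound (μ : Measure ℝ) (hμ : μ (Set.Iio 1) = 0)
    (δ : ℝ) (hδ : δ ∈ Set.Ioo (0:ℝ) 1) (C : ℝ) (hC : 0 < C)
    (hbound : ∀ t ∈ Set.Ioc 0 δ,
      ∫⁻ x in Set.Ici (1:ℝ), ENNReal.ofReal (Real.exp (-t * x)) ∂μ ≤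
        ENNReal.ofReal (C * t⁻¹)) :
    ∃ C' : ℝ, 0 < C' ∧ ∀ t ∈ Set.Ioc 0 δ,
      ∫⁻ x in Set.Ici (1:ℝ), ENNReal.ofReal (Real.exp (-t * x) * x⁻¹) ∂μ ≤
        ENNReal.ofReal (C' * (-Real.log t)) := by
  obtain ⟨hδ0, hδ1⟩ := hδ
  have hL : 0 < -Real.log δ := by have := Real.log_neg hδ0 hδ1; linarith
  have hbδ := hbound δ ⟨hδ0, le_rfl⟩
  have hsf : SFinite (μ.restrict (Set.Ici 1)) :=
    aux_sfinite _ δ (ne_top_of_le_ne_top ENNReal.ofReal_ne_top hbδ)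
  refine ⟨C * δ⁻¹ / (-Real.log δ) + C, by positivity, ?_⟩
  rintro t ⟨ht0, htδ⟩
  have hlog : Real.log t ≤ Real.log δ := Real.log_le_log ht0 htδ
  have hint : ∫ s in t..δ, C * s⁻¹ = C * (Real.log δ - Real.log t) := by
    rw [intervalIntegral.integral_const_mul, integral_inv_of_pos ht0 hδ0,
      Real.log_div hδ0.ne' ht0.ne']
  have hI : IntegrableOn (fun s => C * s⁻¹) (Set.Ioc t δ) volume := by
    refine (ContinuousOn.intervalIntegrable ?_ : IntervalIntegrable _ volume t δ).1
    rw [Set.uIcc_of_le htδ]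
    exact continuousOn_const.mul (continuousOn_id.inv₀ fun s hs => (ht0.trans_le hs.1).ne')
  calc ∫⁻ x in Set.Ici (1:ℝ), ENNReal.ofReal (Real.exp (-t * x) * x⁻¹) ∂μ
      ≤ ∫⁻ x in Set.Ici (1:ℝ), (ENNReal.ofReal (Real.exp (-δ * x)) +
          ∫⁻ s in Set.Ioc t δ, ENNReal.ofReal (Real.exp (-s * x))) ∂μ :=
        setLIntegral_mono' measurableSet_Ici fun x hx => aux_point t δ x htδ hx
    _ = (∫⁻ x in Set.Ici (1:ℝ), ENNReal.ofReal (Real.exp (-δ * x)) ∂μ) +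
          ∫⁻ x in Set.Ici (1:ℝ),
            ∫⁻ s in Set.Ioc t δ, ENNReal.ofReal (Real.exp (-s * x)) ∂volume ∂μ :=
        lintegral_add_left (by fun_prop) _
    _ = (∫⁻ x in Set.Ici (1:ℝ), ENNReal.ofReal (Real.exp (-δ * x)) ∂μ) +
          ∫⁻ s in Set.Ioc t δ,
            ∫⁻ x in Set.Ici (1:ℝ), ENNReal.ofReal (Real.exp (-s * x)) ∂μ := by
        congr 1
        exact lintegral_lintegral_swap (by unfold Function.uncurry; fun_prop)
    _ ≤ ENNReal.ofReal (C * δ⁻¹) + ∫⁻ s in Set.Ioc t δ, ENNReal.ofReal (C * s⁻¹) :=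
        add_le_add hbδ (setLIntegral_mono' measurableSet_Ioc fun s hs =>
          hbound s ⟨ht0.trans hs.1, hs.2⟩)
    _ = ENNReal.ofReal (C * δ⁻¹ + C * (Real.log δ - Real.log t)) := by
        rw [← ofReal_integral_eq_lintegral_ofReal hI, ← intervalIntegral.integral_of_le htδ, hint,
          ENNReal.ofReal_add (by positivity) (mul_nonneg hC.le (by linarith))]
        refine (ae_restrict_iff' measurableSet_Ioc).2 (Filter.Eventually.of_forall fun s hs => ?_)
        have := ht0.trans hs.1
        simp only [Pi.zero_apply]
        positivity
    _ ≤ _ := by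
        apply ENNReal.ofReal_le_ofReal
        have h1 : C * δ⁻¹ ≤ C * δ⁻¹ / (-Real.log δ) * (-Real.log t) := by
          rw [div_mul_eq_mul_div, le_div_iff₀ hL]
          exact mul_le_mul_of_nonneg_left (by linarith) (by positivity)
        nlinarith
end

section
/- Let μ be a positive Borel measure on [1,∞), δ ∈ (0,1) and C > 0 be such that ∫_{[1,∞)} e^{−tx} x^{−1} dμ(x) ≤ C (−log t) for all t ∈ (0,δ]. Then ∫_{[1,∞)} x^{−2} dμ(x) < ∞. -/
open MeasureTheory Filter Real Set

/-- If `μ` is a positive Borel measure on `[1,∞)`, `δ ∈ (0,1)` and `C > 0` with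
`∫_{[1,∞)} e^{-tx} x⁻¹ dμ(x) ≤ C (-log t)` for all `t ∈ (0,δ]`, then
`∫_{[1,∞)} x⁻² dμ(x) < ∞`. -/
theorem second_inverse_moment_of_log_bound (μ : Measure ℝ) (hμ : μ (Set.Iio 1) = 0)
    (δ : ℝ) (hδ : δ ∈ Set.Ioo (0:ℝ) 1) (C : ℝ) (hC : 0 < C)
    (hbound : ∀ t ∈ Set.Ioc 0 δ,
      ∫⁻ x in Set.Ici (1:ℝ), ENNReal.ofReal (Real.exp (-t * x) * x⁻¹) ∂μ ≤
        ENNReal.ofReal (C * (-Real.log t))) :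
    ∫⁻ x in Set.Ici (1:ℝ), ENNReal.ofReal ((x ^ 2)⁻¹) ∂μ < ⊤ := by
  obtain ⟨hδ0, hδ1⟩ := hδ
  have ht0 : ∀ n : ℕ, 0 < δ * (1/2:ℝ)^n := fun n => by positivity
  have htδ : ∀ n : ℕ, δ * (1/2:ℝ)^n ≤ δ := fun n => by
    have : (1/2:ℝ)^n ≤ 1 := pow_le_one₀ (by norm_num) (by norm_num)
    nlinarith
  -- pointwise bound
  have hpt : ∀ x ∈ Set.Ici (1:ℝ), ENNReal.ofReal ((x ^ 2)⁻¹) ≤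
      ∑' n : ℕ, ENNReal.ofReal (Real.exp 2 / δ * (δ * (1/2:ℝ)^n)) *
        ENNReal.ofReal (Real.exp (-(δ * (1/2:ℝ)^n) * x) * x⁻¹) := by
    intro x hx
    have hx1 : (1:ℝ) ≤ x := hx
    have hx0 : 0 < x := by linarith
    obtain ⟨n, hn1, hn2⟩ := exists_nat_pow_near hx1 (one_lt_two : (1:ℝ) < 2)
    refine le_trans ?_ (ENNReal.le_tsum n)
    have hcoef : 0 ≤ Real.exp 2 / δ * (δ * (1/2:ℝ)^n) := by positivity
    rw [← ENNReal.ofReal_mul hcoef]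
    apply ENNReal.ofReal_le_ofReal
    have hp : (0:ℝ) < 2^n := by positivity
    have h1 : x⁻¹ ≤ (1/2:ℝ)^n := by
      rw [one_div, inv_pow]
      exact inv_anti₀ hp hn1
    have h2 : (1/2:ℝ)^n * x ≤ 2 := by
      rw [one_div, inv_pow, inv_mul_le_iff₀ hp]
      rw [pow_succ] at hn2
      exact hn2.le
    have h3 : 1 ≤ Real.exp 2 * Real.exp (-(δ * (1/2:ℝ)^n) * x) := by
      rw [← Real.exp_add]
      apply Real.one_le_exp
      have : 0 ≤ (1/2:ℝ)^n * x := by positivity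
      nlinarith
    have e : Real.exp 2 / δ * (δ * (1/2:ℝ)^n) * (Real.exp (-(δ * (1/2:ℝ)^n) * x) * x⁻¹)
        = (Real.exp 2 * Real.exp (-(δ * (1/2:ℝ)^n) * x)) * ((1/2:ℝ)^n * x⁻¹) := by
      field_simp
    rw [e]
    have h4 : (x^2)⁻¹ ≤ (1/2:ℝ)^n * x⁻¹ := by
      rw [pow_two, mul_inv]
      exact mul_le_mul_of_nonneg_right h1 (by positivity)
    exact h4.trans (le_mul_of_one_le_left (by positivity) h3)
  have hsum : Summable (fun n : ℕ => Real.exp 2 / δ * (δ * (1/2:ℝ)^n) *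
      (C * (-Real.log (δ * (1/2:ℝ)^n)))) := by
    have hs1 : Summable (fun n : ℕ => (1/2:ℝ)^n) := summable_geometric_two
    have hs2 : Summable (fun n : ℕ => (n:ℝ)^1 * (1/2:ℝ)^n) :=
      summable_pow_mul_geometric_of_norm_lt_one 1 (by norm_num)
    have hs := (hs1.mul_left (Real.exp 2 * C * (-Real.log δ))).add
      (hs2.mul_left (Real.exp 2 * C * Real.log 2))
    refine hs.congr fun n => ?_
    rw [Real.log_mul hδ0.ne' (by positivity), Real.log_pow, one_div, Real.log_inv]
    field_simp
    ring
  calc ∫⁻ x in Set.Ici (1:ℝ), ENNReal.ofReal ((x ^ 2)⁻¹) ∂μ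
      ≤ ∫⁻ x in Set.Ici (1:ℝ), ∑' n : ℕ, ENNReal.ofReal (Real.exp 2 / δ * (δ * (1/2:ℝ)^n)) *
        ENNReal.ofReal (Real.exp (-(δ * (1/2:ℝ)^n) * x) * x⁻¹) ∂μ :=
        setLIntegral_mono' measurableSet_Ici hpt
    _ = ∑' n : ℕ, ENNReal.ofReal (Real.exp 2 / δ * (δ * (1/2:ℝ)^n)) *
        ∫⁻ x in Set.Ici (1:ℝ), ENNReal.ofReal (Real.exp (-(δ * (1/2:ℝ)^n) * x) * x⁻¹) ∂μ := by
        rw [lintegral_tsum (fun n => by fun_prop)]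
        congr 1
        ext n
        rw [lintegral_const_mul _ (by fun_prop)]
    _ ≤ ∑' n : ℕ, ENNReal.ofReal (Real.exp 2 / δ * (δ * (1/2:ℝ)^n) *
          (C * (-Real.log (δ * (1/2:ℝ)^n)))) := by
        refine ENNReal.tsum_le_tsum fun n => ?_
        have hcoef : 0 ≤ Real.exp 2 / δ * (δ * (1/2:ℝ)^n) := by positivity
        rw [ENNReal.ofReal_mul hcoef]
        gcongr
        exact hbound _ ⟨ht0 n, htδ n⟩
    _ < ⊤ := hsum.tsum_ofReal_lt_top
end

section
/- Let X be a complex Banach space and J : X → X a continuous antilinear involution (J∘J = id, J additive, J(c·x) = \overline{c}·J(x) for c ∈ ℂ). Let F : {z ∈ ℂ : 0 ≤ Im z ≤ π} → X be continuous, holomorphic on the open strip {z : 0 < Im z < π}, and satisfy F(t + πi) = J(F(t)) for all t ∈ ℝ. Then F(\overline{z} + πi) = J(F(z)) for every z in the closed strip; in particular, J fixes F(πi/2). -/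
open Complex Filter

lemma strip_vanish_near {X : Type*} [NormedAddCommGroup X] [NormedSpace ℂ X]
    (G : ℂ → X)
    (hGc : ContinuousOn G {z : ℂ | 0 ≤ z.im ∧ z.im ≤ Real.pi})
    (hGd : ∀ z : ℂ, 0 < z.im → z.im < Real.pi → DifferentiableAt ℂ G z)
    (hG0 : ∀ t : ℝ, G t = 0) (z : ℂ) (h1 : 0 < z.im) (h2 : z.im < 1 / 2)
    (h3 : -1 < z.re) (h4 : z.re < 1) (h5 : z.im + z.re ^ 2 - z.im ^ 2 < 1 / 4) : G z = 0 := by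
  have hpi := Real.pi_gt_three
  set U : Set ℂ := Set.Ioo (-1 : ℝ) 1 ×ℂ Set.Ioo (0 : ℝ) (1 / 2) with hU
  have hcl : closure U = Set.Icc (-1 : ℝ) 1 ×ℂ Set.Icc (0 : ℝ) (1 / 2) := by
    rw [hU, closure_reProdIm, closure_Ioo (by norm_num), closure_Ioo (by norm_num)]
  have hbd : Bornology.IsBounded U := (Metric.isBounded_Ioo _ _).reProdIm (Metric.isBounded_Ioo _ _)
  have hcomp : IsCompact (closure U) := hbd.isCompact_closure
  have hsub : closure U ⊆ {z : ℂ | 0 ≤ z.im ∧ z.im ≤ Real.pi} := by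
    rw [hcl]
    rintro w ⟨-, hw⟩
    exact ⟨hw.1, by linarith [hw.2]⟩
  obtain ⟨M, hM⟩ := hcomp.exists_bound_of_continuousOn (hGc.mono hsub)
  have hzU : z ∈ closure U := subset_closure ⟨⟨h3, h4⟩, ⟨h1, h2⟩⟩
  have hM0 : 0 ≤ M := (norm_nonneg _).trans (hM z hzU)
  have hnorm : ∀ (N : ℕ) (w : ℂ), ‖Complex.exp (N * (I * w - w ^ 2))‖
      = Real.exp (N * (-(w.im + w.re ^ 2 - w.im ^ 2))) := by
    intro N w
    rw [Complex.norm_exp]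
    congr 1
    simp [pow_two]
    ring_nf
    tauto
  have key : ∀ N : ℕ, ‖G z‖ ≤ M * Real.exp (-(1 / 4 - (z.im + z.re ^ 2 - z.im ^ 2))) ^ N := by
    intro N
    have hd : DiffContOnCl ℂ (fun w => Complex.exp (N * (I * w - w ^ 2)) • G w) U := by
      refine ⟨fun w hw => ?_, ?_⟩
      · have := hGd w hw.2.1 (by linarith [hw.2.2])
        exact DifferentiableAt.differentiableWithinAt (by fun_prop)
      · have := hGc.mono hsub
        exact ContinuousOn.smul (by fun_prop) this
    have hb : ∀ w ∈ frontier U, ‖Complex.exp (N * (I * w - w ^ 2)) • G w‖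
        ≤ Real.exp (N * (-(1 / 4))) * M := by
      intro w hw
      have hwc := frontier_subset_closure hw
      have hwc' := hwc
      rw [hcl] at hwc'
      obtain ⟨⟨a1, a2⟩, ⟨a3, a4⟩⟩ := hwc'
      have hGw := hM w hwc
      by_cases hw0 : w.im = 0
      · have : w = (w.re : ℂ) := by apply Complex.ext <;> simp [hw0]
        have : G w = 0 := by rw [this]; exact hG0 _
        rw [this]; simp; positivity
      · rw [norm_smul, hnorm]
        have hq : 1 / 4 ≤ w.im + w.re ^ 2 - w.im ^ 2 := by
          rw [hU, frontier_reProdIm, frontier_Ioo (by norm_num), frontier_Ioo (by norm_num)] at hw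
          rcases hw with ⟨-, hw⟩ | ⟨hw, -⟩
          · rcases hw with hw | hw
            · exact absurd hw hw0
            · rw [hw]; nlinarith [sq_nonneg w.re]
          · rcases hw with hw | hw <;> rw [hw] <;> nlinarith
        gcongr
    have := Complex.norm_le_of_forall_mem_frontier_norm_le hbd hd hb hzU
    simp only [norm_smul, hnorm] at this
    rw [← Real.exp_nat_mul]
    have hp := Real.exp_pos (N * (-(z.im + z.re ^ 2 - z.im ^ 2)))
    refine le_of_mul_le_mul_left (this.trans (le_of_eq ?_)) hp
    rw [mul_left_comm, ← Real.exp_add, mul_comm]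
    congr 2
    ring
  have hlim : Tendsto (fun N : ℕ => M * Real.exp (-(1 / 4 - (z.im + z.re ^ 2 - z.im ^ 2))) ^ N)
      atTop (nhds (M * 0)) :=
    (tendsto_pow_atTop_nhds_zero_of_lt_one (Real.exp_pos _).le
      (by rw [Real.exp_lt_one_iff]; linarith)).const_mul M
  have := ge_of_tendsto' hlim key
  simpa using this

lemma strip_vanish {X : Type*} [NormedAddCommGroup X] [NormedSpace ℂ X] [CompleteSpace X]
    (G : ℂ → X)
    (hGc : ContinuousOn G {z : ℂ | 0 ≤ z.im ∧ z.im ≤ Real.pi})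
    (hGd : ∀ z : ℂ, 0 < z.im → z.im < Real.pi → DifferentiableAt ℂ G z)
    (hG0 : ∀ t : ℝ, G t = 0) (z : ℂ) (h1 : 0 < z.im) (h2 : z.im < Real.pi) : G z = 0 := by
  have hpi := Real.pi_gt_three
  have hopen : IsOpen (im ⁻¹' Set.Ioo 0 Real.pi) := isOpen_Ioo.preimage continuous_im
  have hconv : Convex ℝ (im ⁻¹' Set.Ioo 0 Real.pi) :=
    (convex_Ioo 0 Real.pi).linear_preimage imLm
  have han : AnalyticOnNhd ℂ G (im ⁻¹' Set.Ioo 0 Real.pi) :=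
    DifferentiableOn.analyticOnNhd
      (fun w hw => (hGd w hw.1 hw.2).differentiableWithinAt) hopen
  have hp : (I / 8 : ℂ) ∈ im ⁻¹' Set.Ioo 0 Real.pi := by
    constructor <;> simp <;> linarith
  refine han.eqOn_zero_of_preconnected_of_eventuallyEq_zero hconv.isPreconnected hp ?_ ⟨h1, h2⟩
  have e1 : ∀ᶠ w : ℂ in nhds (I / 8), 0 < w.im :=
    continuous_im.continuousAt.eventually (lt_mem_nhds (by simp))
  have e2 : ∀ᶠ w : ℂ in nhds (I / 8), w.im < 1 / 2 :=
    continuous_im.continuousAt.eventually (gt_mem_nhds (by simp; norm_num))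
  have e3 : ∀ᶠ w : ℂ in nhds (I / 8), -1 < w.re :=
    continuous_re.continuousAt.eventually (lt_mem_nhds (by simp))
  have e4 : ∀ᶠ w : ℂ in nhds (I / 8), w.re < 1 :=
    continuous_re.continuousAt.eventually (gt_mem_nhds (by simp))
  have e5 : ∀ᶠ w : ℂ in nhds (I / 8), w.im + w.re ^ 2 - w.im ^ 2 < 1 / 4 := by
    have hc : Continuous fun w : ℂ => w.im + w.re ^ 2 - w.im ^ 2 := by fun_prop
    exact hc.continuousAt.eventually (gt_mem_nhds (by simp; norm_num))
  filter_upwards [e1, e2, e3, e4, e5] with w b1 b2 b3 b4 b5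
  exact strip_vanish_near G hGc hGd hG0 w b1 b2 b3 b4 b5



/-- If `J` is a continuous antilinear involution on a complex Banach space `X` and
`F` is continuous on the closed strip `0 ≤ Im z ≤ π`, holomorphic on the open strip,
and satisfies `F(t + πi) = J(F(t))` for all `t ∈ ℝ`, then
`F(conj z + πi) = J(F z)` on the closed strip; in particular `J` fixes `F(πi/2)`. -/
theorem reflection_in_strip
    (X : Type*) [NormedAddCommGroup X] [NormedSpace ℂ X] [CompleteSpace X]
    (J : X → X) (hJcont : Continuous J)
    (hJinv : ∀ x, J (J x) = x)
    (hJadd : ∀ x y, J (x + y) = J x + J y)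
    (hJsmul : ∀ (c : ℂ) (x : X), J (c • x) = (starRingEnd ℂ) c • J x)
    (F : ℂ → X)
    (hFc : ContinuousOn F {z : ℂ | 0 ≤ z.im ∧ z.im ≤ Real.pi})
    (hFd : ∀ z : ℂ, 0 < z.im → z.im < Real.pi → DifferentiableAt ℂ F z)
    (hFb : ∀ t : ℝ, F ((t : ℂ) + Real.pi * Complex.I) = J (F (t : ℂ))) :
    (∀ z : ℂ, 0 ≤ z.im → z.im ≤ Real.pi →
      F ((starRingEnd ℂ) z + Real.pi * Complex.I) = J (F z)) ∧
    J (F (Real.pi * Complex.I / 2)) = F (Real.pi * Complex.I / 2) := by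
  have hpi := Real.pi_pos
  let JL : X →L⋆[ℂ] X := ⟨⟨⟨J, hJadd⟩, hJsmul⟩, hJcont⟩
  let R : ℂ →L⋆[ℂ] ℂ := (starL ℂ : ℂ ≃L⋆[ℂ] ℂ).toContinuousLinearMap
  let G : ℂ → X := fun z => J (F ((starRingEnd ℂ) z + Real.pi * I)) - F z
  have hGc : ContinuousOn G {z : ℂ | 0 ≤ z.im ∧ z.im ≤ Real.pi} := by
    refine ContinuousOn.sub (hJcont.comp_continuousOn (hFc.comp ?_ ?_)) hFc
    · exact (continuous_conj.add continuous_const).continuousOn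
    · rintro w ⟨h1, h2⟩
      constructor <;> simp <;> linarith
  have hGd : ∀ z : ℂ, 0 < z.im → z.im < Real.pi → DifferentiableAt ℂ G z := by
    intro z h1 h2
    refine DifferentiableAt.sub ?_ (hFd z h1 h2)
    have hd : DifferentiableAt ℂ (fun w => F (w + Real.pi * I)) (R z) := by
      rw [differentiableAt_comp_add_const]
      apply hFd <;> simp [R] <;> linarith
    exact hd.comp_semilinear₂ JL R
  have hG0 : ∀ t : ℝ, G t = 0 := by
    intro t
    simp [G, hFb, hJinv]
  have main : ∀ z : ℂ, 0 ≤ z.im → z.im ≤ Real.pi →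
      F ((starRingEnd ℂ) z + Real.pi * I) = J (F z) := by
    intro z h1 h2
    have hz : G z = 0 := by
      rcases h1.eq_or_lt with h1 | h1
      · have : z = (z.re : ℂ) := by apply Complex.ext <;> simp [← h1]
        rw [this]; exact hG0 _
      rcases h2.eq_or_lt with h2 | h2
      · have : z = (z.re : ℂ) + Real.pi * I := by apply Complex.ext <;> simp [h2]
        rw [this]
        simp [G, hFb]
      · exact strip_vanish G hGc hGd hG0 z h1 h2
    rw [← sub_eq_zero.mp hz, hJinv]
  refine ⟨main, ?_⟩
  have h := main (Real.pi * I / 2) (by simp; linarith) (by simp; linarith)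
  rw [← h]
  congr 1
  have h2 : (starRingEnd ℂ) (2 : ℂ) = 2 := map_ofNat _ 2
  simp only [map_div₀, map_mul, conj_ofReal, conj_I, h2]
  ring
end
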